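/- Let T be a sound, recursively axiomatized extension of elementary arithmetic, and let g be a recursive monotone function on arithmetic sentences such that for every consistent sentence φ: (1) φ ∧ Con_T(φ) implies g(φ), and (2) g(φ) strictly implies φ. Then for every true sentence φ there is a true sentence ψ such that ψ implies φ and [g(ψ)]_T = [ψ ∧ Con_T(ψ)]_T. -/

import Mathlib

open FirstOrder FirstOrder.Language

namespace ArithFormalization

/-- Function symbols of the first-order language of arithmetic: `0`, successor, `+`, `·`. -/
inductive Func : ℕ → Type
  | zero : Func 0
  | succ : Func 1
  | add : Func 2
  | mul : Func 2
  deriving DecidableEq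

/-- Relation symbols of the first-order language of arithmetic: `≤`. -/
inductive Rel : ℕ → Type
  | le : Rel 2
  deriving DecidableEq

/-- The first-order language of arithmetic. -/
def L : Language := ⟨Func, Rel⟩

/-- The standard model of arithmetic: `ℕ` as an `L`-structure. -/
instance natStructure : L.Structure ℕ where
  funMap {n} f v :=
    match f with
    | .zero => 0
    | .succ => v 0 + 1
    | .add => v 0 + v 1
    | .mul => v 0 * v 1
  RelMap {n} r v :=
    match r with
    | .le => v 0 ≤ v 1

instance : Encodable (Σ n, L.Functions n) :=
  Encodable.ofEquiv (Fin 4)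
    { toFun := fun x =>
        match x with
        | ⟨_, .zero⟩ => 0
        | ⟨_, .succ⟩ => 1
        | ⟨_, .add⟩ => 2
        | ⟨_, .mul⟩ => 3
      invFun := ![⟨0, .zero⟩, ⟨1, .succ⟩, ⟨2, .add⟩, ⟨2, .mul⟩]
      left_inv := by rintro ⟨_, f⟩ <;> cases f <;> rfl
      right_inv := by decide }

instance : Encodable (Σ n, L.Relations n) :=
  Encodable.ofEquiv (Fin 1)
    { toFun := fun _ => 0
      invFun := ![⟨2, .le⟩]
      left_inv := by rintro ⟨_, r⟩ <;> cases r <;> rfl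
      right_inv := by decide }

/-- Sentences of the language of arithmetic. -/
abbrev Sent : Type := L.Sentence

/-- A canonical Gödel numbering of sentences of arithmetic. -/
def gnum (φ : Sent) : ℕ :=
  Encodable.encode (BoundedFormula.listEncode φ)

/-- `φ` is true in the standard model `ℕ`. -/
def TrueInN (φ : Sent) : Prop := ℕ ⊨ φ

/-- `Prov T φ`: `φ` is provable from the theory `T` (by Gödel's completeness theorem,
provability coincides with semantic consequence). -/
def Prov (T : L.Theory) (φ : Sent) : Prop := T ⊨ᵇ φ

/-- `Implies T φ ψ`: `φ` implies `ψ` over `T`, i.e. `T + φ ⊢ ψ`. -/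
def Implies (T : L.Theory) (φ ψ : Sent) : Prop := Prov (T ∪ {φ}) ψ

/-- `φ` strictly implies `ψ` over `T`. -/
def StrictlyImplies (T : L.Theory) (φ ψ : Sent) : Prop :=
  Implies T φ ψ ∧ ¬ Implies T ψ φ

/-- The theory `T + φ` is consistent. -/
def ConsistentWith (T : L.Theory) (φ : Sent) : Prop := ¬ Implies T φ ⊥

/-- `[φ]_T = [ψ]_T`: `φ` and `ψ` are `T`-provably equivalent. -/
def EquivMod (T : L.Theory) (φ ψ : Sent) : Prop := Prov T (φ ⇔ ψ)

/-- The theory `T` is sound, i.e. all of its axioms are true in `ℕ`. -/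
def Sound (T : L.Theory) : Prop := ∀ φ ∈ T, TrueInN φ

/-- The theory `T` is recursively axiomatized: membership of (Gödel codes of) axioms
is decided by a total recursive function. -/
def RecursivelyAxiomatized (T : L.Theory) : Prop :=
  ∃ f : ℕ → Bool, Computable f ∧ ∀ φ : Sent, (φ ∈ T ↔ f (gnum φ) = true)

/-- A function on sentences is recursive if it is computed by a total recursive
function on Gödel codes. -/
def RecursiveFn (g : Sent → Sent) : Prop :=
  ∃ f : ℕ → ℕ, Computable f ∧ ∀ φ : Sent, f (gnum φ) = gnum (g φ)

/-- `g` is monotone over `T`: if `T ⊢ φ → ψ` then `T ⊢ g(φ) → g(ψ)`. -/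
def Monotone' (T : L.Theory) (g : Sent → Sent) : Prop :=
  ∀ φ ψ : Sent, Prov T (φ ⟹ ψ) → Prov T (g φ ⟹ g ψ)

/-- The atomic formula `t ≤ u`. -/
def leF {n : ℕ} (t u : L.Term (Empty ⊕ Fin n)) : L.BoundedFormula Empty n :=
  Relations.boundedFormula₂ (Rel.le : L.Relations 2) t u

/-- `Δ₀` (bounded) formulas of arithmetic: built from atomic formulas by propositional
connectives and bounded quantification `∀ x ≤ t`, `∃ x ≤ t`. -/
inductive IsDelta0 : ∀ {n : ℕ}, L.BoundedFormula Empty n → Prop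
  | falsum {n} : IsDelta0 (n := n) ⊥
  | equal {n} (t u : L.Term (Empty ⊕ Fin n)) : IsDelta0 (t.bdEqual u)
  | le {n} (t u : L.Term (Empty ⊕ Fin n)) : IsDelta0 (leF t u)
  | imp {n} {φ ψ : L.BoundedFormula Empty n} :
      IsDelta0 φ → IsDelta0 ψ → IsDelta0 (φ.imp ψ)
  | ball {n} (t : L.Term (Empty ⊕ Fin n)) {φ : L.BoundedFormula Empty (n + 1)} :
      IsDelta0 φ →
      IsDelta0 (((leF (Term.var (Sum.inr (Fin.last n)))
        (t.relabel (Sum.map id Fin.castSucc))).imp φ).all)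
  | bex {n} (t : L.Term (Empty ⊕ Fin n)) {φ : L.BoundedFormula Empty (n + 1)} :
      IsDelta0 φ →
      IsDelta0 (((leF (Term.var (Sum.inr (Fin.last n)))
        (t.relabel (Sum.map id Fin.castSucc))) ⊓ φ).ex)

/-- `φ` is a `Π₁` sentence: a block of universal quantifiers followed by a `Δ₀` matrix. -/
def IsPi1 (φ : Sent) : Prop :=
  ∃ (n : ℕ) (θ : L.BoundedFormula Empty n), IsDelta0 θ ∧ φ = θ.alls

/-- `φ` is a `Σ₁` sentence: a block of existential quantifiers followed by a `Δ₀` matrix. -/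
def IsSigma1 (φ : Sent) : Prop :=
  ∃ (n : ℕ) (θ : L.BoundedFormula Empty n), IsDelta0 θ ∧ φ = θ.exs

/-- Close the last `m` free variables of a bounded formula by universal quantifiers. -/
def allsFrom : ∀ (n m : ℕ), L.BoundedFormula Empty (n + m) → L.BoundedFormula Empty n
  | _, 0, φ => φ
  | n, m + 1, φ => allsFrom n m φ.all

/-- `φ` is a `Σ₂` sentence: `∃-block ∀-block Δ₀`. -/
def IsSigma2 (φ : Sent) : Prop :=
  ∃ (n m : ℕ) (θ : L.BoundedFormula Empty (n + m)), IsDelta0 θ ∧ φ = (allsFrom n m θ).exs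

/-- Hypotheses making `ea` a correct stand-in for elementary arithmetic `EA`:
it is sound, recursively axiomatized, and proves every true `Σ₁` sentence. -/
structure IsEA (ea : L.Theory) : Prop where
  sound : Sound ea
  recAx : RecursivelyAxiomatized ea
  sigma1_complete : ∀ φ : Sent, IsSigma1 φ → TrueInN φ → Prov ea φ

/-- Hypotheses making `con` a correct stand-in for the arithmetized consistency operator
`φ ↦ Con_T(φ)` (`Con` of the theory `T + φ`): each value is `Π₁`, its truth in `ℕ`
expresses exactly the consistency of `T + φ`, consistency statements are `T`-provably
antitone in the strength of `φ`, and Gödel's second incompleteness theorem holds for it. -/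
structure IsConOperator (T : L.Theory) (con : Sent → Sent) : Prop where
  pi1 : ∀ φ, IsPi1 (con φ)
  true_iff : ∀ φ, TrueInN (con φ) ↔ ConsistentWith T φ
  prov_mono : ∀ φ ψ, Implies T φ ψ → Prov T (con φ ⟹ con ψ)
  goedel2 : ∀ φ, ConsistentWith T φ → ¬ Implies T φ (con φ)


/-- The theory `T` is consistent. -/
def Consistent (T : L.Theory) : Prop := ¬ Prov T ⊥

/-!
The witness is `ψ = φ ∧ (g φ → Con (φ ∧ ¬ g φ))`. Since `φ` does not imply `g φ`, the sentence
`φ ∧ ¬ g φ` is consistent, so `ψ` is true. By monotonicity `g ψ` implies `g φ`, and it implies `ψ`,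
hence it implies `Con (φ ∧ ¬ g φ)`. But `φ ∧ ¬ g φ` implies `ψ`, whose second conjunct it makes
vacuous, so its consistency yields `Con ψ`.
-/

section Provability

variable {T : L.Theory} {φ ψ χ : Sent}

theorem prov_iff_forall_model :
    Prov T φ ↔ ∀ M : Theory.ModelType.{0, 0, 0} T, M ⊨ φ :=
  Theory.models_sentence_iff

theorem implies_iff_forall_model :
    Implies T φ ψ ↔ ∀ M : Theory.ModelType.{0, 0, 0} T, M ⊨ φ → M ⊨ ψ := by
  refine prov_iff_forall_model.trans ⟨fun h M hφ => ?_, fun h M => ?_⟩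
  · have : M ⊨ T ∪ {φ} := M.is_model.union (Theory.model_singleton_iff.2 hφ)
    exact h (.of (T ∪ {φ}) M)
  · obtain ⟨_, hφ⟩ := Theory.model_union_iff.1 M.is_model
    exact h (.of T M) (Theory.model_singleton_iff.1 hφ)

theorem implies_iff_prov_imp : Implies T φ ψ ↔ Prov T (φ ⟹ ψ) := by
  simp only [implies_iff_forall_model, prov_iff_forall_model, Sentence.Realize,
    Formula.realize_imp]

theorem Implies.trans (hφψ : Implies T φ ψ) (hψχ : Implies T ψ χ) : Implies T φ χ := by
  rw [implies_iff_forall_model] at *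
  exact fun M hφ => hψχ M (hφψ M hφ)

theorem equivMod_inf_iff :
    EquivMod T φ (ψ ⊓ χ) ↔ Implies T φ ψ ∧ Implies T φ χ ∧ Implies T (ψ ⊓ χ) φ := by
  simp only [EquivMod, prov_iff_forall_model, implies_iff_forall_model, Sentence.Realize,
    Formula.realize_iff, Formula.realize_inf, iff_def, imp_and, forall_and, and_assoc]

theorem consistentWith_inf_not_iff : ConsistentWith T (φ ⊓ ∼ψ) ↔ ¬ Implies T φ ψ := by
  simp only [ConsistentWith, implies_iff_forall_model, Sentence.Realize, Formula.realize_inf,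
    Formula.realize_not, Formula.realize_bot, imp_false, not_and, not_not]

theorem Sound.consistentWith (hT : Sound T) (hφ : TrueInN φ) : ConsistentWith T φ := by
  have : ℕ ⊨ T := (Theory.model_iff T).2 hT
  exact fun h => implies_iff_forall_model.1 h (.of T ℕ) hφ

end Provability

/-- The sentence `φ ∧ (γ → Con (φ ∧ ¬γ))`: the weakest strengthening of `φ` that, together with
`γ`, yields the consistency of `φ ∧ ¬γ`. The theorem takes `γ = g φ`. -/
def conStrengthening (con : Sent → Sent) (φ γ : Sent) : Sent :=
  φ ⊓ (γ ⟹ con (φ ⊓ ∼γ))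

section ConStrengthening

variable {T : L.Theory} {con : Sent → Sent} {φ γ χ : Sent}

theorem realize_conStrengthening {M : Type*} [L.Structure M] :
    M ⊨ conStrengthening con φ γ ↔ M ⊨ φ ∧ (M ⊨ γ → M ⊨ con (φ ⊓ ∼γ)) := by
  simp only [conStrengthening, Sentence.Realize, Formula.realize_inf, Formula.realize_imp]

theorem conStrengthening_implies_left : Implies T (conStrengthening con φ γ) φ :=
  implies_iff_forall_model.2 fun _ h => (realize_conStrengthening.1 h).1

theorem inf_not_implies_conStrengthening :
    Implies T (φ ⊓ ∼γ) (conStrengthening con φ γ) := by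
  refine implies_iff_forall_model.2 fun M h => ?_
  obtain ⟨hφ, hγ⟩ := Formula.realize_inf.1 h
  exact realize_conStrengthening.2 ⟨hφ, fun h => absurd h hγ⟩

theorem Implies.con_inf_not (hχ : Implies T χ (conStrengthening con φ γ))
    (hγ : Implies T χ γ) : Implies T χ (con (φ ⊓ ∼γ)) := by
  rw [implies_iff_forall_model] at *
  exact fun M h => (realize_conStrengthening.1 (hχ M h)).2 (hγ M h)

theorem IsConOperator.trueInN_conStrengthening (hcon : IsConOperator T con)
    (hφ : TrueInN φ) (hγ : ¬ Implies T φ γ) : TrueInN (conStrengthening con φ γ) :=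
  realize_conStrengthening.2
    ⟨hφ, fun _ => (hcon.true_iff _).2 (consistentWith_inf_not_iff.2 hγ)⟩

theorem IsConOperator.con_inf_not_implies_con_conStrengthening (hcon : IsConOperator T con) :
    Implies T (con (φ ⊓ ∼γ)) (con (conStrengthening con φ γ)) :=
  implies_iff_prov_imp.2 (hcon.prov_mono _ _ inf_not_implies_conStrengthening)

end ConStrengthening

theorem statement_0_general {T : L.Theory} {con : Sent → Sent} (hcon : IsConOperator T con)
    {g : Sent → Sent} (hg_mono : Monotone' T g)
    (h1 : ∀ φ : Sent, TrueInN φ → Implies T (φ ⊓ con φ) (g φ))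
    (h2 : ∀ φ : Sent, TrueInN φ → StrictlyImplies T (g φ) φ)
    (φ : Sent) (hφ : TrueInN φ) :
    ∃ ψ : Sent, TrueInN ψ ∧ Implies T ψ φ ∧ EquivMod T (g ψ) (ψ ⊓ con ψ) := by
  let ψ := conStrengthening con φ (g φ)
  have hψ : TrueInN ψ := hcon.trueInN_conStrengthening hφ (h2 φ hφ).2
  have hψφ : Implies T ψ φ := conStrengthening_implies_left
  have hgψ_ψ : Implies T (g ψ) ψ := (h2 ψ hψ).1
  have hgψ_gφ : Implies T (g ψ) (g φ) :=
    implies_iff_prov_imp.2 (hg_mono ψ φ (implies_iff_prov_imp.1 hψφ))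
  have hgψ_con : Implies T (g ψ) (con ψ) :=
    (hgψ_ψ.con_inf_not hgψ_gφ).trans hcon.con_inf_not_implies_con_conStrengthening
  exact ⟨ψ, hψ, hψφ, equivMod_inf_iff.2 ⟨hgψ_ψ, hgψ_con, h1 ψ hψ⟩⟩

/-- Montalbán–Walsh.  Let `T` be a sound, recursively axiomatized
extension of elementary arithmetic and `g` a recursive monotone function on sentences
such that for every consistent `φ`: (1) `φ ∧ Con_T(φ)` implies `g(φ)` and (2) `g(φ)`
strictly implies `φ`.  Then for every true `φ` there is a true `ψ` implying `φ` with
`[g(ψ)]_T = [ψ ∧ Con_T(ψ)]_T`. -/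
theorem statement_0
    (T ea : L.Theory) (hT_sound : Sound T) (hT_rec : RecursivelyAxiomatized T)
    (hea : IsEA ea) (hext : ea ⊆ T)
    (con : Sent → Sent) (hcon : IsConOperator T con)
    (g : Sent → Sent) (hg_rec : RecursiveFn g) (hg_mono : Monotone' T g)
    (h1 : ∀ φ : Sent, ConsistentWith T φ → Implies T (φ ⊓ con φ) (g φ))
    (h2 : ∀ φ : Sent, ConsistentWith T φ → StrictlyImplies T (g φ) φ) :
    ∀ φ : Sent, TrueInN φ → ∃ ψ : Sent, TrueInN ψ ∧ Implies T ψ φ ∧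
      EquivMod T (g ψ) (ψ ⊓ con ψ) :=
  statement_0_general hcon hg_mono (fun φ hφ => h1 φ (hT_sound.consistentWith hφ))
    fun φ hφ => h2 φ (hT_sound.consistentWith hφ)

end ArithFormalization
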